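/- Let d be a rational prime, m ≥ 2, n ≥ 1. Suppose the reduction G̅_{d,0,n}(c) ∈ 𝔽_d[c] factors as G̅_{d,0,n} = f_1 ⋯ f_k with f_1, …, f_k ∈ 𝔽_d[c] distinct irreducible polynomials, and let f̃_1, …, f̃_k ∈ ℤ[c] be any lifts. Let c_0 be a root of G_{d,m,n}(c), K = ℚ(c_0), and a_n = f_{c_0,d}^n(0). Then in O_K one has the ideal equality (a_n) = (d, f̃_1(c_0)) ⋯ (d, f̃_k(c_0)). -/

import Mathlib

open Polynomial

noncomputable section

/-- `critPoly d i` is `f_{c,d}^i(0)` as a polynomial in the variable `c` over `ℤ`,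
where `f_{c,d}(x) = x^d + c`. -/
def critPoly (d : ℕ) : ℕ → Polynomial ℤ
  | 0 => 0
  | i + 1 => critPoly d i ^ d + X

/-- The field of rational functions in `c` over `ℚ`, realized as the fraction field of `ℤ[c]`. -/
abbrev RF : Type := FractionRing (Polynomial ℤ)

/-- The natural inclusion `ℤ[c] → ℚ(c)`. -/
def toRF (p : Polynomial ℤ) : RF := algebraMap (Polynomial ℤ) RF p

/-- `G_{d,0,n} = ∏_{k ∣ n} (f_{c,d}^k(0))^{μ(n/k)}` as a rational function. -/
def G0Rat (d n : ℕ) : RF :=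
  ∏ k ∈ n.divisors, toRF (critPoly d k) ^ (ArithmeticFunction.moebius (n / k))

/-- `F_{d,m,n}` as a rational function. -/
def FRat (d m n : ℕ) : RF :=
  ∏ k ∈ n.divisors,
    ((toRF (critPoly d (m + k)) - toRF (critPoly d m)) /
      (toRF (critPoly d (m - 1 + k)) - toRF (critPoly d (m - 1)))) ^
      (ArithmeticFunction.moebius (n / k))

/-- `G_{d,m,n}` (for `m ≥ 2`) as a rational function. -/
def GRat (d m n : ℕ) : RF :=
  if n ∣ m - 1 then FRat d m n / FRat d 1 n else FRat d m n

/-- `G : ℤ[c]` is the Misiurewicz polynomial `G_{d,m,n}` (for `m ≥ 2`). -/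
def IsMisiurewicz (d m n : ℕ) (G : Polynomial ℤ) : Prop := toRF G = GRat d m n

/-- `G0 : ℤ[c]` is the polynomial `G_{d,0,n}`. -/
def IsG0 (d n : ℕ) (G0 : Polynomial ℤ) : Prop := toRF G0 = G0Rat d n


/-- The quotient `(x ^ d - y ^ d) / (x - y)`. -/
def Phi {R : Type*} [CommRing R] (d : ℕ) (x y : R) : R :=
  ∑ i ∈ Finset.range d, x ^ i * y ^ (d - 1 - i)

/-- The map `x ↦ x ^ d + c`. -/
def uni {R : Type*} [CommRing R] (d : ℕ) (c : R) : R → R := fun x => x ^ d + c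

/-- The critical orbit. -/
def orb {R : Type*} [CommRing R] (d : ℕ) (c : R) (n : ℕ) : R := (uni d c)^[n] 0

section generic

variable {R : Type*} [CommRing R] (d : ℕ) (c : R)

lemma Phi_mul (x y : R) : x ^ d - y ^ d = (x - y) * Phi d x y := by
  rw [Phi, mul_comm, (Commute.all x y).geom_sum₂_mul]

lemma Phi_self (x : R) : Phi d x x = d * x ^ (d - 1) := by
  unfold Phi
  rw [Finset.sum_congr rfl (g := fun _ => x ^ (d - 1))]
  · simp
  · intro i hi
    rw [← pow_add]
    congr 1
    have := Finset.mem_range.1 hi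
    omega

lemma Phi_dvd_sub (x y z w t : R) (h1 : t ∣ x - z) (h2 : t ∣ y - w) :
    t ∣ Phi d x y - Phi d z w := by
  unfold Phi
  rw [← Finset.sum_sub_distrib]
  refine Finset.dvd_sum fun i _ => ?_
  have h3 : t ∣ x ^ i - z ^ i := h1.trans (sub_dvd_pow_sub_pow _ _ _)
  have h4 : t ∣ y ^ (d - 1 - i) - w ^ (d - 1 - i) := h2.trans (sub_dvd_pow_sub_pow _ _ _)
  have : x ^ i * y ^ (d - 1 - i) - z ^ i * w ^ (d - 1 - i) =
    (x ^ i - z ^ i) * y ^ (d - 1 - i) + z ^ i * (y ^ (d - 1 - i) - w ^ (d - 1 - i)) := by ring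
  rw [this]
  exact dvd_add (h3.mul_right _) (h4.mul_left _)

lemma Phi_smul (a x y : R) : Phi d (a * x) (a * y) = a ^ (d - 1) * Phi d x y := by
  unfold Phi
  rw [Finset.mul_sum]
  refine Finset.sum_congr rfl fun i hi => ?_
  have := Finset.mem_range.1 hi
  have h : d - 1 = i + (d - 1 - i) := by omega
  conv_rhs => rw [h, pow_add]
  have h' : i + (d - 1 - i) - i = d - 1 - i := by omega
  rw [h']
  ring

lemma Phi_dvd (a x y : R) (hd : 2 ≤ d) (hx : a ∣ x) (hy : a ∣ y) : a ∣ Phi d x y := by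
  obtain ⟨x, rfl⟩ := hx
  obtain ⟨y, rfl⟩ := hy
  rw [Phi_smul]
  exact (dvd_pow_self a (by omega)).mul_right _

lemma map_Phi {S : Type*} [CommRing S] (φ : R →+* S) (x y : R) :
    φ (Phi d x y) = Phi d (φ x) (φ y) := by
  simp [Phi]

lemma uni_sub (x y : R) : uni d c x - uni d c y = (x - y) * Phi d x y := by
  rw [← Phi_mul]; simp [uni]

lemma iter_sub (k : ℕ) (x y : R) : x - y ∣ (uni d c)^[k] x - (uni d c)^[k] y := by
  induction k generalizing x y with
  | zero => simp
  | succ k ih =>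
    simp only [Function.iterate_succ_apply]
    refine dvd_trans ?_ (ih _ _)
    rw [uni_sub]; exact dvd_mul_right _ _

lemma iter_sub' (k : ℕ) (hk : 1 ≤ k) (x y : R) :
    (x - y) * Phi d x y ∣ (uni d c)^[k] x - (uni d c)^[k] y := by
  obtain ⟨k, rfl⟩ := Nat.exists_eq_add_of_le' hk
  rw [Function.iterate_succ_apply, Function.iterate_succ_apply, ← uni_sub d c]
  exact iter_sub _ _ _ _ _

lemma orb_zero : orb d c 0 = 0 := rfl

lemma orb_succ (n : ℕ) : orb d c (n + 1) = orb d c n ^ d + c := by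
  simp only [orb, Function.iterate_succ_apply', uni]

lemma orb_add (i j : ℕ) : orb d c (i + j) = (uni d c)^[i] (orb d c j) := by
  simp [orb, Function.iterate_add_apply]

lemma map_orb {S : Type*} [CommRing S] (φ : R →+* S) (n : ℕ) :
    φ (orb d c n) = orb d (φ c) n := by
  induction n with
  | zero => simp [orb_zero]
  | succ n ih => simp [orb_succ, ih]

lemma orb_sub_dvd (i j : ℕ) : orb d c j ∣ orb d c (i + j) - orb d c i := by
  have := iter_sub d c i (orb d c j) 0
  rw [sub_zero] at this
  rw [orb_add]; exact this

lemma orb_dvd_mul (i j : ℕ) : orb d c i ∣ orb d c (i * j) := by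
  induction j with
  | zero => simp [orb_zero]
  | succ j ih =>
    have := orb_sub_dvd d c (i * j) i
    rw [mul_add, mul_one]
    exact (dvd_sub_left ih).1 this

lemma orb_dvd_of_dvd {i j : ℕ} (h : i ∣ j) : orb d c i ∣ orb d c j := by
  obtain ⟨k, rfl⟩ := h
  exact orb_dvd_mul _ _ _ _

lemma orb_sub_dvd_pow (i j : ℕ) (hi : 1 ≤ i) :
    orb d c j ^ d ∣ orb d c (i + j) - orb d c i := by
  have := iter_sub' d c i hi (orb d c j) 0
  rw [← Phi_mul] at this
  rcases Nat.eq_zero_or_pos d with rfl | hd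
  · simp
  rw [zero_pow hd.ne', sub_zero] at this
  rw [orb_add]; exact this

/-- all `a_{jn}` are `a_n (1 + a_n^{d-1} u)` -/
lemma orb_mul_eq (n j : ℕ) (hn : 1 ≤ n) (hj : 1 ≤ j) (hd : 2 ≤ d) :
    ∃ u, orb d c (n * j) = orb d c n * (1 + orb d c n * u) := by
  obtain ⟨j, rfl⟩ := Nat.exists_eq_add_of_le' hj
  have h1 := orb_sub_dvd_pow d c n (n * j) hn
  have h2 : orb d c n ^ 2 ∣ orb d c (n * j) ^ d :=
    (pow_dvd_pow_of_dvd (orb_dvd_mul d c n j) 2).trans (pow_dvd_pow _ hd)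
  obtain ⟨u, hu⟩ := h2.trans h1
  refine ⟨u, ?_⟩
  rw [mul_add, mul_one, add_comm]
  linear_combination hu

/-- exact multiplicity -/
lemma orb_sub_mul (j p k : ℕ) (hp : 1 ≤ p) (hk : 1 ≤ k) :
    ∃ u v, orb d c (j + p * k) - orb d c j = (orb d c (j + p) - orb d c j) *
      (1 + d * u + (orb d c (j + p) - orb d c j) * v) := by
  induction k, hk using Nat.le_induction with
  | base => exact ⟨0, 0, by simp⟩
  | succ k hk ih =>
    obtain ⟨u, v, h⟩ := ih
    obtain ⟨w, hw⟩ := iter_sub' d c p hp (orb d c (j + p * k)) (orb d c j)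
    obtain ⟨z, hz⟩ := Phi_dvd_sub d (orb d c (j + p * k)) (orb d c j) (orb d c j) (orb d c j)
      (orb d c (j + p) - orb d c j) ⟨_, h⟩ (by simp)
    rw [Phi_self, sub_eq_iff_eq_add] at hz
    rw [← orb_add, ← orb_add, h, hz] at hw
    have e1 : j + p * (k + 1) = p + (j + p * k) := by ring
    rw [e1]
    rw [add_comm p j] at hw
    obtain ⟨D, hD⟩ : ∃ D, D = orb d c (j + p) - orb d c j := ⟨_, rfl⟩
    rw [← hD] at hw ⊢
    refine ⟨(1 + d * u + D * v) * orb d c j ^ (d - 1) * w, (1 + d * u + D * v) * z * w, ?_⟩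
    linear_combination hw - hD

end generic

section phase2

variable {R : Type*} [CommRing R] [IsDomain R] (d : ℕ) (c : R)

open Function

lemma orb_isUnit (hd : 2 ≤ d) (m n g : ℕ) (hn : 1 ≤ n)
    (hmin : minimalPeriod (uni d c) (orb d c m) = n) (hg : g ∣ n) (hgn : g < n) :
    IsUnit (orb d c g) := by
  have hg0 : 0 < g := Nat.pos_of_dvd_of_pos hg hn
  have hper : orb d c m ∈ periodicPts (uni d c) := by
    rw [← minimalPeriod_pos_iff_mem_periodicPts, hmin]; exact hn
  obtain ⟨b, hb⟩ : ∃ b, b = orb d c (n * m) := ⟨_, rfl⟩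
  have hle : m ≤ n * m := Nat.le_mul_of_pos_left _ hn
  have hbmin : minimalPeriod (uni d c) b = n := by
    rw [hb, ← Nat.sub_add_cancel hle, orb_add, minimalPeriod_apply_iterate hper, hmin]
  obtain ⟨b', hb'⟩ : ∃ b', b' = (uni d c)^[g] b := ⟨_, rfl⟩
  have hne : b' ≠ b := by
    intro h
    exact not_isPeriodicPt_of_pos_of_lt_minimalPeriod hg0.ne' (by rw [hbmin]; exact hgn)
      (hb'.symm.trans h : IsPeriodicPt (uni d c) g b)
  have hpb : IsPeriodicPt (uni d c) n b := hbmin ▸ isPeriodicPt_minimalPeriod _ _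
  have hpb' : IsPeriodicPt (uni d c) n b' := hb' ▸ hpb.apply_iterate g
  obtain ⟨w, hw⟩ := iter_sub' d c n hn b' b
  rw [hpb.eq, hpb'.eq, mul_assoc] at hw
  have h1 : Phi d b' b * w = 1 :=
    mul_left_cancel₀ (sub_ne_zero.2 hne) (by rw [← hw, mul_one])
  have hgb : orb d c g ∣ b := hb ▸ orb_dvd_of_dvd d c (hg.mul_right m)
  have hgb' : orb d c g ∣ b' := by
    rw [hb', hb, ← orb_add]
    exact orb_dvd_of_dvd d c (dvd_add dvd_rfl (hg.mul_right m))
  exact isUnit_of_dvd_one ((Phi_dvd d _ _ _ hd hgb' hgb).trans ⟨w, h1.symm⟩)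

lemma orb_dvd_natCast (hd : 2 ≤ d) (M n : ℕ) (hM : 1 ≤ M) (hn : 1 ≤ n)
    (hmin : minimalPeriod (uni d c) (orb d c (M + 1)) = n)
    (hne : orb d c (M + n) ≠ orb d c M) : orb d c n ∣ (d : R) := by
  have hper : orb d c (M + 1 + n) = orb d c (M + 1) := by
    have : IsPeriodicPt (uni d c) n (orb d c (M + 1)) := hmin ▸ isPeriodicPt_minimalPeriod _ _
    rw [add_comm, orb_add]; exact this
  have h0 : Phi d (orb d c (M + n)) (orb d c M) = 0 := by
    have : (orb d c (M + n) - orb d c M) * Phi d (orb d c (M + n)) (orb d c M) = 0 := by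
      rw [← uni_sub d c, sub_eq_zero]
      have := hper
      rwa [add_right_comm, orb_succ, orb_succ] at this
    exact (mul_eq_zero.1 this).resolve_left (sub_ne_zero.2 hne)
  by_cases hnM : n ∣ M
  · obtain ⟨s, rfl⟩ := hnM
    have hs : 1 ≤ s := by
      rcases Nat.eq_zero_or_pos s with rfl | h
      · simp at hM
      · exact h
    obtain ⟨u, hu⟩ := orb_mul_eq d c n s hn hs hd
    obtain ⟨v, hv⟩ := orb_mul_eq d c n (s + 1) hn (by omega) hd
    rw [mul_add, mul_one] at hv
    have ha : orb d c n ≠ 0 := by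
      intro h
      rw [hu, hv, h] at hne
      simp at hne
    rw [hu, hv, Phi_smul] at h0
    have h1 := (mul_eq_zero.1 h0).resolve_left (pow_ne_zero _ ha)
    have h2 := Phi_dvd_sub d (1 + orb d c n * v) (1 + orb d c n * u) 1 1 (orb d c n)
      (by simp) (by simp)
    rw [h1, Phi_self] at h2
    simpa using h2
  · have h2 := Phi_dvd_sub d (orb d c (M + n)) (orb d c M) (orb d c M) (orb d c M) (orb d c n)
      (orb_sub_dvd d c M n) (by simp)
    rw [h0, Phi_self, zero_sub, dvd_neg] at h2
    have hu : IsUnit (orb d c (Nat.gcd n M)) := by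
      refine orb_isUnit d c hd (M + 1) n _ hn hmin (Nat.gcd_dvd_left _ _) ?_
      refine lt_of_le_of_ne (Nat.gcd_le_left _ hn) fun h => hnM ?_
      rw [← h]; exact Nat.gcd_dvd_right _ _
    have hcop : IsCoprime (orb d c n) (orb d c M) := by
      have : ∀ i j, Ideal.span {orb d c (Nat.gcd i j)} ≤ Ideal.span {orb d c i, orb d c j} := by
        intro i j
        have key : ∀ k, IsPeriodicPt (uni d (Ideal.Quotient.mk (Ideal.span {orb d c i, orb d c j}) c)) k 0 ↔
            orb d c k ∈ Ideal.span {orb d c i, orb d c j} := by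
          intro k
          rw [← Ideal.Quotient.eq_zero_iff_mem, map_orb]
          rfl
        rw [Ideal.span_singleton_le_iff_mem, ← key]
        exact ((key i).2 (Ideal.subset_span (by simp))).gcd
          ((key j).2 (Ideal.subset_span (by simp)))
      have h3 := this n M
      rw [Ideal.span_singleton_eq_top.2 hu, top_le_iff] at h3
      rw [← Ideal.isCoprime_span_singleton_iff, Ideal.isCoprime_iff_sup_eq, ← Ideal.span_insert]
      exact h3
    exact hcop.pow_right.dvd_of_dvd_mul_right h2

end phase2

lemma moebius_sum (p n : ℕ) (hn : 1 ≤ n) :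
    ∑ k ∈ n.divisors, (if p ∣ k then ArithmeticFunction.moebius (n / k) else 0) =
      if p = n then 1 else 0 := by
  have h := (ArithmeticFunction.sum_eq_iff_sum_mul_moebius_eq (R := ℤ)
    (f := fun i => if p = i then 1 else 0) (g := fun k => if p ∣ k then 1 else 0)).1
    (by
      intro k hk
      rw [Finset.sum_ite_eq]
      simp [hk.ne']) n hn
  rw [← h]
  have h2 := Nat.sum_divisorsAntidiagonal' (n := n) (f := fun a b =>
    ((ArithmeticFunction.moebius a : ℤ)) * (if p ∣ b then (1 : ℤ) else 0))
  simp only [Int.cast_id]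
  rw [h2]
  refine Finset.sum_congr rfl fun k _ => ?_
  split_ifs <;> simp

lemma moebius_prod {Γ : Type*} [CommGroupWithZero Γ] (W : ℕ → Γ) (e : Γ) (he : e ≠ 0) (p n : ℕ)
    (hn : 1 ≤ n) (hW : ∀ k, 1 ≤ k → W k = if p ∣ k then e else 1) :
    ∏ k ∈ n.divisors, W k ^ (ArithmeticFunction.moebius (n / k)) = if p = n then e else 1 := by
  have hs : ∀ (s : Finset ℕ) (t : ℕ → ℤ), ∏ k ∈ s, e ^ t k = e ^ ∑ k ∈ s, t k := by
    intro s t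
    induction s using Finset.induction_on with
    | empty => simp
    | insert a s ha ih => rw [Finset.prod_insert ha, Finset.sum_insert ha, zpow_add₀ he, ih]
  have h1 : ∏ k ∈ n.divisors, W k ^ (ArithmeticFunction.moebius (n / k)) =
      ∏ k ∈ n.divisors, e ^ (if p ∣ k then ArithmeticFunction.moebius (n / k) else 0) := by
    refine Finset.prod_congr rfl fun k hk => ?_
    rw [hW k (Nat.pos_of_mem_divisors hk)]
    split_ifs <;> simp
  rw [h1, hs, moebius_sum p n hn]
  split_ifs <;> simp

lemma critPoly_eq (d i : ℕ) : critPoly d i = orb d (X : ℤ[X]) i := by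
  induction i with
  | zero => rfl
  | succ i ih => rw [critPoly, orb_succ, ih]

lemma orb_lt (d : ℕ) (hd : 1 ≤ d) : StrictMono (fun i => orb d (1 : ℤ) i) := by
  have h0 : ∀ i, 0 ≤ orb d (1 : ℤ) i := by
    intro i
    induction i with
    | zero => exact le_rfl
    | succ i ih => rw [orb_succ]; positivity
  refine strictMono_nat_of_lt_succ fun i => ?_
  rw [orb_succ]
  rcases (h0 i).eq_or_lt with h | h
  · rw [← h, zero_pow (by omega)]; norm_num
  · have := le_self_pow₀ (show 1 ≤ orb d (1 : ℤ) i by omega) (show d ≠ 0 by omega)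
    omega

lemma orb_X_ne (d : ℕ) (hd : 1 ≤ d) {i j : ℕ} (h : i ≠ j) :
    orb d (X : ℤ[X]) i - orb d X j ≠ 0 := by
  intro h0
  have h1 := congrArg (Polynomial.evalRingHom (1 : ℤ)) h0
  rw [map_sub, map_orb, map_orb, map_zero, sub_eq_zero] at h1
  simp only [coe_evalRingHom, eval_X] at h1
  exact h ((orb_lt d hd).injective h1)

lemma toRF_sub (p q : ℤ[X]) : toRF (p - q) = toRF p - toRF q := by simp [toRF]
lemma toRF_mul (p q : ℤ[X]) : toRF (p * q) = toRF p * toRF q := by simp [toRF]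
lemma toRF_inj {p q : ℤ[X]} (h : toRF p = toRF q) : p = q :=
  IsFractionRing.injective ℤ[X] RF h
lemma toRF_ne {p : ℤ[X]} (h : p ≠ 0) : toRF p ≠ 0 := fun h' =>
  h (toRF_inj (h'.trans (by simp [toRF])))

section phase1

set_option linter.unusedSectionVars false

open NumberField Function

variable {K : Type*} [Field K] [NumberField K] (c₀ : 𝓞 K)

/-- `V` is (multiplicative) order of vanishing at `c₀`. -/
def GoodV (V : RF →*₀ WithZero (Multiplicative ℤ)) : Prop :=
  (∀ p, V (toRF p) ≤ 1) ∧ ∀ p, V (toRF p) < 1 ↔ aeval c₀ p = 0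

lemma exists_V : ∃ V, GoodV c₀ V := by
  have hj : Function.Injective (Polynomial.mapRingHom (Int.castRingHom K)) :=
    Polynomial.map_injective _ (RingHom.injective_int _)
  let v : IsDedekindDomain.HeightOneSpectrum K[X] :=
    ⟨Ideal.span {X - C (c₀ : K)}, by
      rw [Ideal.span_singleton_prime (X_sub_C_ne_zero _)]
      exact prime_X_sub_C _, by
      simpa [Ideal.span_singleton_eq_bot] using X_sub_C_ne_zero _⟩
  let V : RF →*₀ WithZero (Multiplicative ℤ) :=
    ((v.valuation (FractionRing K[X])).toMonoidWithZeroHom).comp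
      (IsFractionRing.map (K := RF) (L := FractionRing K[X]) hj).toMonoidWithZeroHom
  have hV : ∀ p, V (toRF p) = v.valuation (FractionRing K[X])
      (algebraMap K[X] _ (p.map (Int.castRingHom K))) := by
    intro p
    change v.valuation (FractionRing K[X]) (IsFractionRing.map hj (algebraMap _ RF p)) = _
    rw [IsFractionRing.map, IsLocalization.map_eq]
    rfl
  refine ⟨V, fun p => ?_, fun p => ?_⟩
  · rw [hV]; exact v.valuation_le_one _
  · rw [hV, v.valuation_lt_one_iff_mem]
    change _ ∈ Ideal.span {X - C (c₀ : K)} ↔ _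
    rw [Ideal.mem_span_singleton, dvd_iff_isRoot, IsRoot, eval_map,
      ← RingOfIntegers.coe_eq_zero_iff]
    have := aeval_algebraMap_apply K c₀ p
    rw [← this, aeval_def]
    rfl

lemma one_add_mul_ne {d : ℕ} (hd : d.Prime) (u : 𝓞 K) : 1 + (d : 𝓞 K) * u ≠ 0 := by
  intro h
  have h1 : IsUnit ((algebraMap ℤ (𝓞 K)) (d : ℤ)) := by
    refine IsUnit.of_mul_eq_one (-u) ?_
    simp only [map_natCast]
    linear_combination -h
  have h2 : IsUnit (d : ℤ) := IsUnit.of_map _ _ h1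
  exact (Nat.prime_iff_prime_int.1 hd).not_isUnit h2

/-- `V (a_{j+k} - a_j)` -/
def EE (V : RF →*₀ WithZero (Multiplicative ℤ)) (d j k : ℕ) : WithZero (Multiplicative ℤ) :=
  V (toRF (critPoly d (j + k)) - toRF (critPoly d j))

lemma aeval_orb (d i : ℕ) : aeval c₀ (orb d (X : ℤ[X]) i) = orb d c₀ i := by
  have := map_orb d (X : ℤ[X]) (aeval (R := ℤ) c₀).toRingHom i
  simpa using this


variable {c₀} {V : RF →*₀ WithZero (Multiplicative ℤ)}

lemma V_eq_one (hV : GoodV c₀ V) {p : ℤ[X]} (h : aeval c₀ p ≠ 0) : V (toRF p) = 1 :=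
  le_antisymm (hV.1 p) (not_lt.1 fun h' => h ((hV.2 p).1 h'))

lemma EE_eq (d j k : ℕ) :
    EE V d j k = V (toRF (orb d X (j + k) - orb d X j)) := by
  rw [EE, critPoly_eq, critPoly_eq, toRF_sub]

lemma EE_ne {d : ℕ} (hd : d.Prime) {j k : ℕ} (hk : 1 ≤ k) : EE V d j k ≠ 0 := by
  rw [EE_eq, _root_.map_ne_zero]
  exact toRF_ne (orb_X_ne d hd.one_lt.le (by omega))

lemma EE_le (hV : GoodV c₀ V) (d j k : ℕ) : EE V d j k ≤ 1 := by
  rw [EE_eq]; exact hV.1 _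

lemma EE_lt (hV : GoodV c₀ V) (d j k : ℕ) :
    EE V d j k < 1 ↔ orb d c₀ (j + k) = orb d c₀ j := by
  rw [EE_eq, hV.2, map_sub, aeval_orb, aeval_orb, sub_eq_zero]

lemma EE_succ (d j k : ℕ) :
    EE V d (j + 1) k = EE V d j k * V (toRF (Phi d (orb d X (j + k)) (orb d X j))) := by
  rw [EE_eq, EE_eq, ← map_mul, ← toRF_mul, ← uni_sub d X, add_right_comm, orb_succ, orb_succ]
  rfl

/-- minimal period of `a_j` -/
def mp (d : ℕ) (c₀ : 𝓞 K) (j : ℕ) : ℕ := minimalPeriod (uni d c₀) (orb d c₀ j)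

lemma mp_dvd (d j k : ℕ) : mp d c₀ j ∣ k ↔ orb d c₀ (j + k) = orb d c₀ j := by
  rw [mp, ← isPeriodicPt_iff_minimalPeriod_dvd, add_comm, orb_add]
  rfl

lemma mp_mono (d i j n : ℕ) (hij : i ≤ j) (hn : 1 ≤ n) (h : mp d c₀ i = n) : mp d c₀ j = n := by
  have hper : orb d c₀ i ∈ periodicPts (uni d c₀) := by
    rw [← minimalPeriod_pos_iff_mem_periodicPts]
    change 0 < mp d c₀ i
    omega
  rw [mp, ← Nat.sub_add_cancel hij, orb_add, minimalPeriod_apply_iterate hper]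
  exact h

lemma EE_val (hV : GoodV c₀ V) {d : ℕ} (hd : d.Prime) (j k : ℕ) (hk : 1 ≤ k) :
    EE V d j k = if mp d c₀ j ∣ k then (if mp d c₀ j = 0 then 1 else EE V d j (mp d c₀ j))
      else 1 := by
  split_ifs with h1 h2
  · rw [h2, zero_dvd_iff] at h1; omega
  · obtain ⟨t, rfl⟩ := h1
    have ht : 1 ≤ t := by
      rcases Nat.eq_zero_or_pos t with rfl | h
      · simp at hk
      · exact h
    obtain ⟨u, v, huv⟩ := orb_sub_mul d (X : ℤ[X]) j (mp d c₀ j) t (by omega) ht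
    rw [EE_eq, huv, toRF_mul, map_mul, ← EE_eq, V_eq_one hV, mul_one]
    have h0 := (mp_dvd d j (mp d c₀ j)).1 dvd_rfl
    simp only [map_add, map_mul, map_sub, aeval_orb, h0, sub_self, zero_mul, add_zero, map_one,
      map_natCast]
    exact one_add_mul_ne hd _
  · refine le_antisymm (EE_le hV _ _ _) (not_lt.1 fun h => h1 ?_)
    rw [mp_dvd]
    exact (EE_lt hV _ _ _).1 h

/-- the value of `∏ E_j(k)^{μ(n/k)}` -/
def hh (V : RF →*₀ WithZero (Multiplicative ℤ)) (d : ℕ) (c₀ : 𝓞 K) (n j : ℕ) :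
    WithZero (Multiplicative ℤ) := if mp d c₀ j = n then EE V d j n else 1

lemma prod_EE (hV : GoodV c₀ V) {d : ℕ} (hd : d.Prime) (j n : ℕ) (hn : 1 ≤ n) :
    ∏ k ∈ n.divisors, EE V d j k ^ (ArithmeticFunction.moebius (n / k)) = hh V d c₀ n j := by
  rw [moebius_prod (EE V d j) (if mp d c₀ j = 0 then 1 else EE V d j (mp d c₀ j)) ?_
    (mp d c₀ j) n hn (EE_val hV hd j), hh]
  · split_ifs with h1 h2
    · omega
    · rw [h1]
    · rfl
  · split_ifs with h
    · exact one_ne_zero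
    · exact EE_ne hd (by omega)

lemma hh_ne {d : ℕ} (hd : d.Prime) (j n : ℕ) (hn : 1 ≤ n) : hh V d c₀ n j ≠ 0 := by
  unfold hh
  split_ifs
  · exact EE_ne hd hn
  · exact one_ne_zero

lemma hh_le (hV : GoodV c₀ V) (d j n : ℕ) : hh V d c₀ n j ≤ 1 := by
  unfold hh
  split_ifs
  · exact EE_le hV _ _ _
  · exact le_rfl

lemma V_FRat (hV : GoodV c₀ V) {d : ℕ} (hd : d.Prime) (M n : ℕ) (hn : 1 ≤ n) :
    V (FRat d (M + 1) n) = hh V d c₀ n (M + 1) / hh V d c₀ n M := by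
  rw [FRat, map_prod, ← prod_EE hV hd _ n hn, ← prod_EE hV hd _ n hn, ← Finset.prod_div_distrib]
  refine Finset.prod_congr rfl fun k _ => ?_
  rw [map_zpow₀, map_div₀, div_zpow]
  rfl

lemma hh_div_le (hV : GoodV c₀ V) {d : ℕ} (hd : d.Prime) (M n : ℕ) (hn : 1 ≤ n) :
    hh V d c₀ n (M + 1) / hh V d c₀ n M ≤ 1 := by
  by_cases h : mp d c₀ M = n
  · rw [hh, hh, if_pos h, if_pos (mp_mono d M (M + 1) n (by omega) hn h), EE_succ,
      mul_div_cancel_left₀ _ (EE_ne hd hn)]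
    exact hV.1 _
  · rw [hh, hh, if_neg h, div_one]
    exact hh_le hV _ _ _

lemma phase1 (d M n : ℕ) (hd : d.Prime) (hM : 1 ≤ M) (hn : 1 ≤ n) (G : ℤ[X])
    (hG : IsMisiurewicz d (M + 1) n G) (hroot : aeval c₀ G = 0) :
    mp d c₀ (M + 1) = n ∧ orb d c₀ (M + n) ≠ orb d c₀ M := by
  obtain ⟨V, hV⟩ := exists_V c₀
  have hG1 : V (GRat d (M + 1) n) < 1 := by
    rw [← hG]; exact (hV.2 G).2 hroot
  have hF : V (FRat d (M + 1) n) < 1 := by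
    unfold GRat at hG1
    split_ifs at hG1
    · rw [map_div₀] at hG1
      have h1 : V (FRat d 1 n) = _ := V_FRat hV hd 0 n hn
      have h2 := hh_div_le hV hd 0 n hn
      rw [← h1] at h2
      have h3 : V (FRat d 1 n) ≠ 0 := by
        rw [h1]; exact div_ne_zero (hh_ne hd _ _ hn) (hh_ne hd _ _ hn)
      rw [div_lt_one₀ (zero_lt_iff.2 h3)] at hG1
      exact hG1.trans_le h2
    · exact hG1
  rw [V_FRat hV hd M n hn] at hF
  have hmp : mp d c₀ (M + 1) = n := by
    by_contra h
    have h' : mp d c₀ M ≠ n := fun h' => h (mp_mono d M (M + 1) n (by omega) hn h')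
    rw [hh, hh, if_neg h, if_neg h', div_one] at hF
    exact lt_irrefl _ hF
  refine ⟨hmp, fun heq => ?_⟩
  have hM' : mp d c₀ M = n := by
    have h1 : mp d c₀ M ∣ n := (mp_dvd d M n).2 heq
    have h2 := mp_mono d M (M + 1) _ (by omega) (Nat.pos_of_dvd_of_pos h1 hn) rfl
    rw [← h2, hmp]
  have hdiv : hh V d c₀ n (M + 1) / hh V d c₀ n M =
      V (toRF (Phi d (orb d X (M + n)) (orb d X M))) := by
    rw [hh, hh, if_pos hmp, if_pos hM', EE_succ, mul_div_cancel_left₀ _ (EE_ne hd hn)]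
  rw [hdiv, hV.2] at hF
  have hF' : Phi d (orb d c₀ (M + n)) (orb d c₀ M) = 0 := by
    have := map_Phi d (aeval (R := ℤ) c₀).toRingHom (orb d X (M + n)) (orb d X M)
    simp only [AlgHom.toRingHom_eq_coe, RingHom.coe_coe, aeval_orb] at this
    rw [← this]; exact hF
  rw [heq, Phi_self] at hF'
  have hM0 : orb d c₀ M = 0 := by
    rcases mul_eq_zero.1 hF' with h | h
    · exact absurd h (Nat.cast_ne_zero.2 hd.ne_zero)
    · exact eq_zero_of_pow_eq_zero h
  have h0 : mp d c₀ 0 = n := by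
    rw [← hM', mp, mp, hM0]; rfl
  have hnM : n ∣ M := by
    rw [← h0, mp_dvd, zero_add, hM0, orb_zero]
  have h1 : mp d c₀ 1 = n := mp_mono d 0 1 n (by omega) hn h0
  have hF1 : V (FRat d 1 n) = V (toRF (orb d X n)) ^ (d - 1) := by
    have h2 : V (FRat d 1 n) = _ := V_FRat hV hd 0 n hn
    rw [h2, hh, hh, if_pos h0, if_pos h1, EE_succ, mul_div_cancel_left₀ _ (EE_ne hd hn)]
    have e : Phi d (orb d (X : ℤ[X]) (0 + n)) (orb d X 0) = orb d X n ^ (d - 1) * Phi d 1 0 := by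
      rw [← Phi_smul]; simp [orb_zero]
    have e2 : Phi d (1 : ℤ[X]) 0 = 1 := by
      have := Phi_mul d (1 : ℤ[X]) 0
      rw [zero_pow hd.ne_zero] at this
      simpa using this.symm
    rw [e, e2, mul_one, toRF, map_pow, map_pow]
    rfl
  have hFM : V (FRat d (M + 1) n) = V (toRF (orb d X n)) ^ (d - 1) := by
    rw [V_FRat hV hd M n hn, hdiv]
    obtain ⟨s, rfl⟩ := hnM
    have hs : 1 ≤ s := by
      rcases Nat.eq_zero_or_pos s with rfl | h
      · simp at hM
      · exact h
    obtain ⟨u, hu⟩ := orb_mul_eq d (X : ℤ[X]) n s hn hs hd.two_le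
    obtain ⟨v, hv⟩ := orb_mul_eq d (X : ℤ[X]) n (s + 1) hn (by omega) hd.two_le
    rw [mul_add, mul_one] at hv
    have hn0 : orb d c₀ n = 0 := by
      have := (mp_dvd d 0 n).1 (by rw [h0])
      rwa [zero_add, orb_zero] at this
    rw [hu, hv, Phi_smul, toRF_mul, map_mul]
    have e3 : V (toRF (Phi d (1 + orb d X n * v) (1 + orb d X n * u))) = 1 := by
      apply V_eq_one hV
      have := map_Phi d (aeval (R := ℤ) c₀).toRingHom (1 + orb d X n * v) (1 + orb d X n * u)
      simp only [AlgHom.toRingHom_eq_coe, RingHom.coe_coe, map_add, map_mul, aeval_orb, hn0,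
        map_one, zero_mul, add_zero, Phi_self, one_pow, mul_one] at this
      rw [this]
      exact Nat.cast_ne_zero.2 hd.ne_zero
    rw [e3, mul_one, toRF, map_pow, map_pow]
    rfl
  rw [GRat, if_pos (by simpa using hnM), map_div₀, hF1, hFM, div_self] at hG1
  · exact lt_irrefl _ hG1
  · refine pow_ne_zero _ ((map_ne_zero V).2 (toRF_ne ?_))
    have := orb_X_ne d hd.one_lt.le (show n ≠ 0 by omega)
    simpa [orb_zero] using this

end phase1

section final

open NumberField Function

lemma G0_mul (d n : ℕ) (hd : 1 ≤ d) (G0 : ℤ[X]) (hG0 : IsG0 d n G0) :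
    G0 * ∏ k ∈ n.divisors, orb d X k ^ (-ArithmeticFunction.moebius (n / k)).toNat =
      ∏ k ∈ n.divisors, orb d X k ^ (ArithmeticFunction.moebius (n / k)).toNat := by
  apply toRF_inj
  rw [toRF_mul, hG0, G0Rat]
  simp only [toRF, map_prod, map_pow]
  rw [← Finset.prod_mul_distrib]
  refine Finset.prod_congr rfl fun k hk => ?_
  have hk0 := Nat.pos_of_mem_divisors hk
  have hne : algebraMap ℤ[X] RF (orb d X k) ≠ 0 := by
    refine toRF_ne ?_
    have := orb_X_ne d hd (show k ≠ 0 by omega)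
    simpa [orb_zero] using this
  rw [critPoly_eq, ← zpow_natCast, ← zpow_natCast, ← zpow_add₀ hne]
  congr 1
  omega

lemma prod_unit_ne {R : Type*} [CommRing R] (n : ℕ) (hn : 1 ≤ n) (a : ℕ → R) (t : ℕ → ℕ)
    (h : ∀ k, k ∣ n → k < n → IsUnit (a k)) :
    Associated (∏ k ∈ n.divisors, a k ^ t k) (a n ^ t n) := by
  rw [← Finset.mul_prod_erase _ _ (Nat.mem_divisors_self n (by omega))]
  refine (associated_mul_unit_left _ _ ?_)
  rw [IsUnit.prod_iff]
  intro k hk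
  rw [Finset.mem_erase, Nat.mem_divisors] at hk
  exact (h k hk.2.1 (lt_of_le_of_ne (Nat.le_of_dvd hn hk.2.1) hk.1)).pow _

lemma G0_assoc {K : Type*} [Field K] [NumberField K] (c₀ : 𝓞 K)
    (d n : ℕ) (hd : 1 ≤ d) (hn : 1 ≤ n) (G0 : ℤ[X]) (hG0 : IsG0 d n G0)
    (h : ∀ k, k ∣ n → k < n → IsUnit (orb d c₀ k)) :
    Associated (aeval c₀ G0) (orb d c₀ n) := by
  have h1 := congrArg (aeval c₀) (G0_mul d n hd G0 hG0)
  simp only [map_mul, map_prod, map_pow, aeval_orb] at h1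
  have h2 := prod_unit_ne n hn (orb d c₀) (fun k => (ArithmeticFunction.moebius (n / k)).toNat) h
  have h3 := prod_unit_ne n hn (orb d c₀) (fun k => (-ArithmeticFunction.moebius (n / k)).toNat) h
  rw [Nat.div_self hn] at h2 h3
  simp only [ArithmeticFunction.moebius_apply_one] at h2 h3
  simp only [Int.reduceNeg, Int.reduceToNat, pow_one, pow_zero] at h2 h3
  rw [← h1] at h2
  exact ((associated_mul_unit_right _ _ (associated_one_iff_isUnit.1 h3))).trans h2

lemma exists_of_map_zero (d : ℕ) (p : ℤ[X]) (h : p.map (Int.castRingHom (ZMod d)) = 0) :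
    ∃ q, p = (d : ℤ[X]) * q := by
  have : C (d : ℤ) ∣ p := by
    rw [C_dvd_iff_dvd_coeff]
    intro i
    have := congrArg (fun q => q.coeff i) h
    simpa [ZMod.intCast_zmod_eq_zero_iff_dvd, coeff_map] using this
  obtain ⟨q, hq⟩ := this
  exact ⟨q, by simpa using hq⟩

/-- the reduction of `G0` is squarefree -/
lemma G0_sq (d n : ℕ) [hd : Fact d.Prime] (hn : 1 ≤ n) (G0 : ℤ[X]) (hG0 : IsG0 d n G0)
    (q : (ZMod d)[X]) (hq : Irreducible q) :
    ¬ q ^ 2 ∣ G0.map (Int.castRingHom (ZMod d)) := by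
  intro hdvd
  have hder : ∀ k, 1 ≤ k → derivative (orb d (X : (ZMod d)[X]) k) = 1 := by
    intro k hk
    obtain ⟨k, rfl⟩ := Nat.exists_eq_add_of_le' hk
    rw [orb_succ, derivative_add, derivative_X, derivative_pow]
    simp
  have hsq : ∀ k, 1 ≤ k → ¬ q ^ 2 ∣ orb d (X : (ZMod d)[X]) k := by
    rintro k hk ⟨w, hw⟩
    have := hder k hk
    rw [hw] at this
    refine hq.not_isUnit (isUnit_of_dvd_one ?_)
    rw [← this, derivative_mul, derivative_pow]
    refine dvd_add (Dvd.intro (C 2 * derivative q * w) ?_) (Dvd.intro (q * derivative w) ?_)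
    · push_cast; simp; ring
    · ring
  have hne : ∀ k, 1 ≤ k → orb d (X : (ZMod d)[X]) k ≠ 0 := fun k hk h =>
    hsq k hk (by rw [h]; exact dvd_zero _)
  let v : IsDedekindDomain.HeightOneSpectrum (ZMod d)[X] :=
    ⟨Ideal.span {q}, by
      rw [Ideal.span_singleton_prime hq.ne_zero]
      exact hq.prime, by
      simpa [Ideal.span_singleton_eq_bot] using hq.ne_zero⟩
  have hv : ∀ (r : (ZMod d)[X]) (i : ℕ), v.intValuation r ≤ WithZero.exp (-(i : ℤ)) ↔
      q ^ i ∣ r := by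
    intro r i
    rw [v.intValuation_le_pow_iff_mem]
    change r ∈ Ideal.span {q} ^ i ↔ _
    rw [Ideal.span_singleton_pow, Ideal.mem_span_singleton]
  have hmul := congrArg (mapRingHom (Int.castRingHom (ZMod d))) (G0_mul d n hd.1.one_lt.le G0 hG0)
  simp only [map_mul, map_prod, map_pow, map_orb] at hmul
  simp only [coe_mapRingHom, map_X] at hmul
  have hmul2 := congrArg v.intValuation hmul
  simp only [map_mul, map_prod, map_pow] at hmul2
  have hvne : ∀ k, 1 ≤ k → v.intValuation (orb d (X : (ZMod d)[X]) k) ≠ 0 := fun k hk =>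
    v.intValuation_ne_zero _ (hne k hk)
  have hW : ∀ k, 1 ≤ k → v.intValuation (orb d (X : (ZMod d)[X]) k) =
      if minimalPeriod (uni d (Ideal.Quotient.mk (Ideal.span {q}) X)) 0 ∣ k then
        v.intValuation q else 1 := by
    intro k hk
    have key : minimalPeriod (uni d (Ideal.Quotient.mk (Ideal.span {q}) X)) 0 ∣ k ↔
        q ∣ orb d (X : (ZMod d)[X]) k := by
      rw [← isPeriodicPt_iff_minimalPeriod_dvd, ← Ideal.mem_span_singleton,
        ← Ideal.Quotient.eq_zero_iff_mem, map_orb]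
      rfl
    split_ifs with h
    · obtain ⟨w, hw⟩ := key.1 h
      rw [hw, map_mul]
      have : v.intValuation w = 1 := by
        refine le_antisymm (v.intValuation_le_one _) (not_lt.1 fun h' => hsq k hk ?_)
        rw [v.intValuation_lt_one_iff_mem] at h'
        obtain ⟨z, hz⟩ := Ideal.mem_span_singleton.1 h'
        exact ⟨z, by rw [hw, hz]; ring⟩
      rw [this, mul_one]
    · refine le_antisymm (v.intValuation_le_one _) (not_lt.1 fun h' => h (key.2 ?_))
      rw [v.intValuation_lt_one_iff_mem] at h'
      exact Ideal.mem_span_singleton.1 h'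
  have hq0 : v.intValuation q ≠ 0 := v.intValuation_ne_zero _ hq.ne_zero
  have hprod := moebius_prod _ _ hq0 _ n hn hW
  have hval : v.intValuation (G0.map (Int.castRingHom (ZMod d))) = 
      ∏ k ∈ n.divisors, v.intValuation (orb d (X : (ZMod d)[X]) k) ^
        (ArithmeticFunction.moebius (n / k)) := by
    have hP : ∏ k ∈ n.divisors, v.intValuation (orb d (X : (ZMod d)[X]) k) ^
        (-ArithmeticFunction.moebius (n / k)).toNat ≠ 0 :=
      Finset.prod_ne_zero_iff.2 fun k hk => pow_ne_zero _ (hvne k (Nat.pos_of_mem_divisors hk))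
    refine mul_right_cancel₀ hP (hmul2.trans ?_)
    rw [← Finset.prod_mul_distrib]
    refine Finset.prod_congr rfl fun k hk => ?_
    rw [← zpow_natCast, ← zpow_natCast, ← zpow_add₀ (hvne k (Nat.pos_of_mem_divisors hk))]
    congr 1
    omega
  have hle := (hv _ 2).2 hdvd
  have hqn : ¬ v.intValuation q ≤ WithZero.exp (-((2 : ℕ) : ℤ)) := by
    rw [hv]
    rintro ⟨w, hw⟩
    refine hq.not_isUnit (isUnit_of_dvd_one ⟨w, ?_⟩)
    refine mul_left_cancel₀ hq.ne_zero ?_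
    rw [mul_one]; conv_lhs => rw [hw]
    ring
  rw [hval, hprod] at hle
  split_ifs at hle
  · exact hqn hle
  · exact hqn ((v.intValuation_le_one _).trans hle)

lemma span_mul_span {R : Type*} [CommRing R] (d x y a b e : R) (h : a * d + b * x + e * y = 1) :
    Ideal.span {d, x} * Ideal.span {d, y} = Ideal.span {d, x * y} := by
  rw [Ideal.span_pair_mul_span_pair]
  apply le_antisymm
  · rw [Ideal.span_le]
    have h1 : d ∈ Ideal.span {d, x * y} := Ideal.subset_span (by simp)
    have h2 : x * y ∈ Ideal.span {d, x * y} := Ideal.subset_span (by simp)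
    rintro z (rfl | rfl | rfl | rfl)
    · exact Ideal.mul_mem_right _ _ h1
    · exact Ideal.mul_mem_right _ _ h1
    · exact Ideal.mul_mem_left _ _ h1
    · exact h2
  · rw [Ideal.span_le]
    rintro z (rfl | rfl)
    · have hz : a * (z * z) + e * (z * y) + b * (x * z) ∈
          Ideal.span {z * z, z * y, x * z, x * y} :=
        add_mem (add_mem (Ideal.mul_mem_left _ _ (Ideal.subset_span (by simp)))
          (Ideal.mul_mem_left _ _ (Ideal.subset_span (by simp))))
          (Ideal.mul_mem_left _ _ (Ideal.subset_span (by simp)))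
      have h2 : a * (z * z) + e * (z * y) + b * (x * z) = z := by linear_combination z * h
      rw [h2] at hz
      exact hz
    · exact Ideal.subset_span (by simp)

lemma prod_span {R : Type*} [CommRing R] (c : R) (d k : ℕ) [hd : Fact d.Prime]
    (ft : Fin k → ℤ[X])
    (hcop : ∀ i j, i ≠ j → IsCoprime ((ft i).map (Int.castRingHom (ZMod d)))
      ((ft j).map (Int.castRingHom (ZMod d)))) (s : Finset (Fin k)) :
    ∏ i ∈ s, Ideal.span {(d : R), aeval c (ft i)} =
      Ideal.span {(d : R), aeval c (∏ i ∈ s, ft i)} := by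
  induction s using Finset.induction_on with
  | empty => simp [Ideal.span_insert]
  | insert i s hi ih =>
    rw [Finset.prod_insert hi, Finset.prod_insert hi, ih, map_mul]
    have h1 : IsCoprime ((ft i).map (Int.castRingHom (ZMod d)))
        ((∏ j ∈ s, ft j).map (Int.castRingHom (ZMod d))) := by
      rw [Polynomial.map_prod]
      exact IsCoprime.prod_right fun j hj => hcop i j (by rintro rfl; exact hi hj)
    obtain ⟨a, b, hab⟩ := h1
    have hsurj := Polynomial.map_surjective (Int.castRingHom (ZMod d)) (ZMod.ringHom_surjective _)
    obtain ⟨a, rfl⟩ := hsurj a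
    obtain ⟨b, rfl⟩ := hsurj b
    obtain ⟨q, hq⟩ := exists_of_map_zero d (a * ft i + b * ∏ j ∈ s, ft j - 1) (by
      rw [Polynomial.map_sub, Polynomial.map_add, Polynomial.map_mul, Polynomial.map_mul, hab]
      simp)
    have hq2 := congrArg (aeval c) hq
    simp only [map_sub, map_add, map_mul, map_one, map_natCast] at hq2
    exact span_mul_span _ _ _ (-(aeval c q)) (aeval c a) (aeval c b) (by linear_combination hq2)

end final

/-- Let `d` be a prime, `m ≥ 2`, `n ≥ 1`. Suppose the reduction of
`G_{d,0,n}` modulo `d` factors as `f_1 ⋯ f_k` with the `f_i ∈ 𝔽_d[c]` distinct irreducible,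
and let `f̃_i ∈ ℤ[c]` be any lifts. If `c₀` is a root of `G_{d,m,n}` and `K = ℚ(c₀)`, then
`(a_n) = (d, f̃_1(c₀)) ⋯ (d, f̃_k(c₀))` in `O_K`, where `a_n = f_{c₀,d}^n(0)`. -/
theorem orbit_ideal_factorization (d m n : ℕ) [hd : Fact d.Prime] (hm : 2 ≤ m) (hn : 1 ≤ n)
    (G G0 : Polynomial ℤ) (hG : IsMisiurewicz d m n G) (hG0 : IsG0 d n G0)
    (k : ℕ) (f : Fin k → Polynomial (ZMod d))
    (hfirr : ∀ i, Irreducible (f i)) (hfdist : Function.Injective f)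
    (hfact : G0.map (Int.castRingHom (ZMod d)) = ∏ i, f i)
    (ft : Fin k → Polynomial ℤ) (hlift : ∀ i, (ft i).map (Int.castRingHom (ZMod d)) = f i)
    (K : Type*) [Field K] [NumberField K] (c₀ : NumberField.RingOfIntegers K)
    (hroot : Polynomial.aeval (c₀ : K) G = 0)
    (hgen : Algebra.adjoin ℚ {(c₀ : K)} = ⊤) :
    Ideal.span {(fun x => x ^ d + c₀)^[n] 0} =
      ∏ i, Ideal.span {(d : NumberField.RingOfIntegers K), Polynomial.aeval c₀ (ft i)} := by
  obtain ⟨M, rfl⟩ : ∃ M, m = M + 1 := ⟨m - 1, by omega⟩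
  have hroot' : aeval c₀ G = 0 := by
    have := aeval_algebraMap_apply K c₀ G
    rw [← NumberField.RingOfIntegers.coe_eq_zero_iff, ← hroot]
    exact this.symm
  obtain ⟨hmp, hne⟩ := phase1 d M n hd.1 (by omega) hn G hG hroot'
  have hunit : ∀ g, g ∣ n → g < n → IsUnit (orb d c₀ g) := fun g h1 h2 =>
    orb_isUnit d c₀ hd.1.two_le (M + 1) n g hn hmp h1 h2
  have hdvd : orb d c₀ n ∣ (d : NumberField.RingOfIntegers K) :=
    orb_dvd_natCast d c₀ hd.1.two_le M n (by omega) hn hmp hne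
  have hassoc := G0_assoc c₀ d n hd.1.one_lt.le hn G0 hG0 hunit
  have hcop : ∀ i j, i ≠ j → IsCoprime ((ft i).map (Int.castRingHom (ZMod d)))
      ((ft j).map (Int.castRingHom (ZMod d))) := by
    intro i j hij
    rw [hlift, hlift, (hfirr i).coprime_iff_not_dvd]
    intro h
    refine G0_sq d n hn G0 hG0 (f i) (hfirr i) ?_
    rw [hfact, ← Finset.mul_prod_erase _ _ (Finset.mem_univ i), pow_two]
    exact mul_dvd_mul_left _ (h.trans (Finset.dvd_prod_of_mem _ (by simp [hij.symm])))
  rw [prod_span c₀ d k ft hcop]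
  obtain ⟨q, hq⟩ := exists_of_map_zero d (G0 - ∏ i, ft i) (by
    rw [Polynomial.map_sub, Polynomial.map_prod, hfact, sub_eq_zero]
    exact Finset.prod_congr rfl fun i _ => (hlift i).symm)
  have hq2 := congrArg (aeval c₀) hq
  simp only [map_sub, map_mul, map_natCast] at hq2
  change Ideal.span {orb d c₀ n} = _
  apply le_antisymm
  · rw [Ideal.span_singleton_le_iff_mem]
    obtain ⟨w, hw⟩ := hassoc.dvd
    rw [hw]
    refine Ideal.mul_mem_right _ _ ?_
    rw [sub_eq_iff_eq_add.1 hq2]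
    exact add_mem (Ideal.mul_mem_right _ _ (Ideal.subset_span (by simp)))
      (Ideal.subset_span (by simp))
  · rw [Ideal.span_le]
    rintro z (rfl | rfl)
    · exact Ideal.mem_span_singleton.2 hdvd
    · refine Ideal.mem_span_singleton.2 ?_
      have : aeval c₀ (∏ i, ft i) = aeval c₀ G0 - d * aeval c₀ q := by linear_combination -hq2
      rw [this]
      exact dvd_sub hassoc.symm.dvd (hdvd.mul_right _)
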